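/- arXiv:1503.03631 — 7 statements merged into one kernel-verified Lean document; each statement's English description precedes it below -/
import Mathlib

section
/- Let (X, λ) be a measure space, let ν be a Young measure on X, let p ∈ (1, ∞), and suppose M := ∫_X ∫_ℝ |ζ|^p dν_z(ζ) dλ(z) < ∞. Let f(z, ξ) = ν_z((ξ, ∞)) and χ_f(z, ξ) = f(z, ξ) − 1_{ξ<0}. Then for every measurable set E ⊆ X with λ(E) < ∞, ∫_E ∫_ℝ |χ_f(z, ξ)| dξ dλ(z) ≤ (∫_ℝ (1 + |ξ|^p)^{−1} dξ) · (λ(E) + M) < ∞; in particular χ_f is integrable on E × ℝ. -/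
/-!
The number `|χ_f(z, ξ)|` is the `ν_z`-mass of a half-line lying in `{|ζ| ≥ |ξ|}`, so Chebyshev's
inequality with the weight `1 + |·|^p` gives
`(1 + |ξ|^p) |χ_f(z, ξ)| ≤ 1 + ∫ |ζ|^p dν_z(ζ)`. Divide by `1 + |ξ|^p`, integrate in `ξ` and then
over `E`; the constant is finite because `p > 1`.
-/

open MeasureTheory ProbabilityTheory
open scoped ENNReal

open Set
open scoped NNReal

theorem lintegral_inv_one_add_nnnorm_rpow_lt_top {F : Type*} [NormedAddCommGroup F]
    [NormedSpace ℝ F] [FiniteDimensional ℝ F] [MeasurableSpace F] [BorelSpace F]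
    (ρ : Measure F) [ρ.IsAddHaarMeasure] {p : ℝ} (hp : Module.finrank ℝ F < p) :
    ∫⁻ x, ((1 + ‖x‖₊ ^ p)⁻¹ : ℝ≥0) ∂ρ < ∞ := by
  have hp₀ : 0 ≤ p := (Nat.cast_nonneg _).trans hp.le
  have rpow_le (x : F) : (1 + ‖x‖₊) ^ p ≤ 2 ^ p * (1 + ‖x‖₊ ^ p) := by
    rw [← ENNReal.coe_le_coe]
    simpa [ENNReal.coe_rpow_of_nonneg _ hp₀] using
      ENNReal.add_rpow_le_two_rpow_mul_rpow_add_rpow 1 ‖x‖₊ hp₀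
  have inv_le (x : F) : (1 + ‖x‖₊ ^ p)⁻¹ ≤ 2 ^ p * (1 + ‖x‖₊) ^ (-p) := by
    rw [NNReal.rpow_neg, ← div_eq_mul_inv, inv_le_iff_one_le_mul₀ (by positivity),
      div_mul_eq_mul_div, one_le_div (by positivity)]
    exact rpow_le x
  have ofReal_eq (x : F) :
      ENNReal.ofReal ((1 + ‖x‖) ^ (-p)) = ((1 + ‖x‖₊) ^ (-p) : ℝ≥0) :=
    ENNReal.ofReal_coe_nnreal (p := (1 + ‖x‖₊) ^ (-p))
  calc ∫⁻ x, ((1 + ‖x‖₊ ^ p)⁻¹ : ℝ≥0) ∂ρ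
    _ ≤ ∫⁻ x, (2 ^ p : ℝ≥0) * ENNReal.ofReal ((1 + ‖x‖) ^ (-p)) ∂ρ := by
        simp only [ofReal_eq, ← ENNReal.coe_mul]
        exact lintegral_mono fun x => ENNReal.coe_le_coe.mpr (inv_le x)
    _ = (2 ^ p : ℝ≥0) * ∫⁻ x, ENNReal.ofReal ((1 + ‖x‖) ^ (-p)) ∂ρ :=
        lintegral_const_mul' _ _ ENNReal.coe_ne_top
    _ < ∞ := ENNReal.mul_lt_top ENNReal.coe_lt_top (finite_integral_one_add_norm hp)

/-- The function `χ_f(ξ) = f(ξ) - 1_{ξ < 0}` attached to the kinetic function `f(ξ) = μ((ξ, ∞))` of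
a measure `μ` on `ℝ`. For a Young measure `ν`, `χ_f(z, ξ)` is `kineticChi (ν z) ξ`. -/
noncomputable def kineticChi (μ : Measure ℝ) (ξ : ℝ) : ℝ :=
  μ.real (Ioi ξ) - (Iio (0 : ℝ)).indicator (fun _ => (1 : ℝ)) ξ

section ProbabilityMeasure

variable (μ : Measure ℝ)

theorem kineticChi_of_nonneg {ξ : ℝ} (hξ : 0 ≤ ξ) : kineticChi μ ξ = μ.real (Ioi ξ) := by
  rw [kineticChi, indicator_of_notMem (notMem_Iio.mpr hξ), sub_zero]

variable [IsProbabilityMeasure μ]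

theorem kineticChi_of_neg {ξ : ℝ} (hξ : ξ < 0) : kineticChi μ ξ = -μ.real (Iic ξ) := by
  rw [kineticChi, indicator_of_mem (mem_Iio.mpr hξ), ← compl_Iic,
    probReal_compl_eq_one_sub measurableSet_Iic, sub_sub_cancel_left]

theorem enorm_kineticChi_le (ξ : ℝ) : ‖kineticChi μ ξ‖ₑ ≤ μ {ζ | ‖ξ‖₊ ≤ ‖ζ‖₊} := by
  rcases le_or_gt 0 ξ with hξ | hξ
  · rw [kineticChi_of_nonneg μ hξ, Real.enorm_eq_ofReal measureReal_nonneg, ofReal_measureReal]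
    exact measure_mono fun ζ hζ => abs_le_abs_of_nonneg hξ (le_of_lt hζ)
  · rw [kineticChi_of_neg μ hξ, enorm_neg, Real.enorm_eq_ofReal measureReal_nonneg,
      ofReal_measureReal]
    exact measure_mono fun ζ hζ => abs_le_abs_of_nonpos hξ.le hζ

theorem weight_mul_enorm_kineticChi_le {φ : ℝ≥0 → ℝ≥0} (hφ : Monotone φ) (ξ : ℝ) :
    φ ‖ξ‖₊ * ‖kineticChi μ ξ‖ₑ ≤ ∫⁻ ζ, φ ‖ζ‖₊ ∂μ :=
  have hφ_meas : Measurable fun ζ : ℝ => (φ ‖ζ‖₊ : ℝ≥0∞) :=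
    (hφ.measurable.comp measurable_nnnorm).coe_nnreal_ennreal
  calc φ ‖ξ‖₊ * ‖kineticChi μ ξ‖ₑ
    _ ≤ φ ‖ξ‖₊ * μ {ζ | ‖ξ‖₊ ≤ ‖ζ‖₊} := by
        gcongr
        exact enorm_kineticChi_le μ ξ
    _ ≤ φ ‖ξ‖₊ * μ {ζ | (φ ‖ξ‖₊ : ℝ≥0∞) ≤ φ ‖ζ‖₊} := by
        gcongr with ζ
        exact fun hζ => ENNReal.coe_le_coe.mpr (hφ hζ)
    _ ≤ ∫⁻ ζ, φ ‖ζ‖₊ ∂μ := mul_meas_ge_le_lintegral hφ_meas _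

theorem lintegral_enorm_kineticChi_le {φ : ℝ≥0 → ℝ≥0} (hφ : Monotone φ) (hφ_pos : ∀ r, 0 < φ r) :
    ∫⁻ ξ, ‖kineticChi μ ξ‖ₑ ≤ (∫⁻ ξ : ℝ, ((φ ‖ξ‖₊)⁻¹ : ℝ≥0)) * ∫⁻ ζ, φ ‖ζ‖₊ ∂μ := by
  have hφ_inv_meas : Measurable fun ξ : ℝ => (((φ ‖ξ‖₊)⁻¹ : ℝ≥0) : ℝ≥0∞) :=
    (hφ.measurable.comp measurable_nnnorm).inv.coe_nnreal_ennreal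
  rw [← lintegral_mul_const _ hφ_inv_meas]
  refine lintegral_mono fun ξ => ?_
  rw [ENNReal.coe_inv (hφ_pos _).ne', mul_comm, ← div_eq_mul_inv,
    ENNReal.le_div_iff_mul_le (.inl (ENNReal.coe_ne_zero.mpr (hφ_pos _).ne'))
      (.inl ENNReal.coe_ne_top), mul_comm]
  exact weight_mul_enorm_kineticChi_le μ hφ ξ

end ProbabilityMeasure

section Kernel

theorem lintegral_lintegral_one_add {X Y : Type*} [MeasurableSpace X] [MeasurableSpace Y]
    (μ : Measure X) (κ : Kernel X Y) [IsMarkovKernel κ] (g : Y → ℝ≥0∞) :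
    ∫⁻ z, ∫⁻ y, 1 + g y ∂(κ z) ∂μ = μ univ + ∫⁻ z, ∫⁻ y, g y ∂(κ z) ∂μ := by
  simp only [lintegral_add_left measurable_const, lintegral_const, measure_univ, mul_one, one_mul]

variable {X : Type*} [MeasurableSpace X] (μ : Measure X) (κ : Kernel X ℝ)

theorem measurable_kineticChi [IsSFiniteKernel κ] :
    Measurable fun q : X × ℝ => kineticChi (κ q.1) q.2 := by
  have measurableSet_gt : MeasurableSet {r : (X × ℝ) × ℝ | r.1.2 < r.2} :=
    measurableSet_lt (by fun_prop) measurable_snd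
  have measurable_measure_Ioi : Measurable fun q : X × ℝ => κ q.1 (Ioi q.2) :=
    Kernel.measurable_kernel_prodMk_left (κ := κ.comap Prod.fst measurable_fst) measurableSet_gt
  exact measurable_measure_Ioi.ennreal_toReal.sub
    ((measurable_const.indicator measurableSet_Iio).comp measurable_snd)

theorem integrable_kineticChi_iff [IsSFiniteKernel κ] :
    Integrable (fun q : X × ℝ => kineticChi (κ q.1) q.2) (μ.prod volume) ↔
      ∫⁻ z, (∫⁻ ξ, ‖kineticChi (κ z) ξ‖ₑ) ∂μ < ∞ := by
  have hχ := measurable_kineticChi κ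
  rw [Integrable, and_iff_right hχ.aestronglyMeasurable, hasFiniteIntegral_iff_enorm,
    lintegral_prod _ hχ.enorm.aemeasurable]

variable [IsMarkovKernel κ]

theorem lintegral_lintegral_enorm_kineticChi_le {φ : ℝ≥0 → ℝ≥0} (hφ : Monotone φ)
    (hφ_pos : ∀ r, 0 < φ r) :
    ∫⁻ z, (∫⁻ ξ, ‖kineticChi (κ z) ξ‖ₑ) ∂μ ≤
      (∫⁻ ξ : ℝ, ((φ ‖ξ‖₊)⁻¹ : ℝ≥0)) * ∫⁻ z, ∫⁻ ζ, φ ‖ζ‖₊ ∂(κ z) ∂μ := by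
  have moment_meas : Measurable fun z => ∫⁻ ζ, (φ ‖ζ‖₊ : ℝ≥0∞) ∂(κ z) :=
    (hφ.measurable.comp measurable_nnnorm).coe_nnreal_ennreal.lintegral_kernel
  rw [← lintegral_const_mul _ moment_meas]
  exact lintegral_mono fun z => lintegral_enorm_kineticChi_le (κ z) hφ hφ_pos

theorem lintegral_lintegral_enorm_kineticChi_le_rpow {p : ℝ} (hp : 0 ≤ p) :
    ∫⁻ z, (∫⁻ ξ, ‖kineticChi (κ z) ξ‖ₑ) ∂μ ≤
      (∫⁻ ξ : ℝ, ((1 + ‖ξ‖₊ ^ p)⁻¹ : ℝ≥0)) *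
        (μ univ + ∫⁻ z, ∫⁻ ζ, (‖ζ‖₊ ^ p : ℝ≥0) ∂(κ z) ∂μ) := by
  rw [← lintegral_lintegral_one_add]
  exact lintegral_lintegral_enorm_kineticChi_le μ κ (φ := fun r => 1 + r ^ p)
    ((NNReal.monotone_rpow_of_nonneg hp).const_add 1) fun r => by positivity

end Kernel

/-- For a Young measure `ν` with finite `p`-moment `M` (`p > 1`), the modified kinetic
function `χ_f(z, ξ) = ν_z((ξ,∞)) - 1_{ξ<0}` satisfies
`∫_E ∫_ℝ |χ_f| dξ dλ ≤ (∫_ℝ (1+|ξ|^p)⁻¹ dξ) (λ(E) + M) < ∞` for every measurable `E` of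
finite measure; in particular `χ_f` is integrable on `E × ℝ`. -/
theorem chi_integrable_on_finite_measure_sets {X : Type*} [MeasurableSpace X] (lam : Measure X)
    (nu : Kernel X ℝ) [IsMarkovKernel nu] (p : ℝ) (hp : 1 < p)
    (M : ℝ≥0∞) (hM : M = ∫⁻ z, ∫⁻ ζ, ENNReal.ofReal (|ζ| ^ p) ∂(nu z) ∂lam) (hMfin : M < ⊤)
    (E : Set X) (hE : MeasurableSet E) (hEfin : lam E < ⊤) :
    (∫⁻ z in E, (∫⁻ ξ : ℝ, ENNReal.ofReal
          |(nu z (Set.Ioi ξ)).toReal - (Set.Iio (0 : ℝ)).indicator (fun _ => (1 : ℝ)) ξ|) ∂lam)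
        ≤ (∫⁻ ξ : ℝ, ENNReal.ofReal ((1 + |ξ| ^ p)⁻¹)) * (lam E + M) ∧
      (∫⁻ z in E, (∫⁻ ξ : ℝ, ENNReal.ofReal
          |(nu z (Set.Ioi ξ)).toReal - (Set.Iio (0 : ℝ)).indicator (fun _ => (1 : ℝ)) ξ|) ∂lam)
        < ⊤ ∧
      Integrable
        (fun q : X × ℝ =>
          (nu q.1 (Set.Ioi q.2)).toReal - (Set.Iio (0 : ℝ)).indicator (fun _ => (1 : ℝ)) q.2)
        ((lam.restrict E).prod volume) := by
  have ofReal_inv (ξ : ℝ) :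
      ENNReal.ofReal ((1 + |ξ| ^ p)⁻¹) = ((1 + ‖ξ‖₊ ^ p)⁻¹ : ℝ≥0) :=
    ENNReal.ofReal_coe_nnreal (p := (1 + ‖ξ‖₊ ^ p)⁻¹)
  have ofReal_rpow (ζ : ℝ) : ENNReal.ofReal (|ζ| ^ p) = (‖ζ‖₊ ^ p : ℝ≥0) :=
    ENNReal.ofReal_coe_nnreal (p := ‖ζ‖₊ ^ p)
  simp only [ofReal_inv, ofReal_rpow, ← Real.enorm_eq_ofReal_abs] at hM ⊢
  have bound : ∫⁻ z in E, (∫⁻ ξ, ‖kineticChi (nu z) ξ‖ₑ) ∂lam ≤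
      (∫⁻ ξ : ℝ, ((1 + ‖ξ‖₊ ^ p)⁻¹ : ℝ≥0)) * (lam E + M) := by
    refine (lintegral_lintegral_enorm_kineticChi_le_rpow (lam.restrict E) nu (by linarith)).trans ?_
    rw [Measure.restrict_apply_univ, hM]
    gcongr
    exact Measure.restrict_le_self
  have weight_lt_top : ∫⁻ ξ : ℝ, ((1 + ‖ξ‖₊ ^ p)⁻¹ : ℝ≥0) < ∞ :=
    lintegral_inv_one_add_nnnorm_rpow_lt_top volume (by simpa using hp)
  have lt_top := bound.trans_lt
    (ENNReal.mul_lt_top weight_lt_top (ENNReal.add_lt_top.mpr ⟨hEfin, hMfin⟩))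
  exact ⟨bound, lt_top, (integrable_kineticChi_iff (lam.restrict E) nu).mpr lt_top⟩
end

section
/- (Compactness of Young measures, first part.) Let (X, λ) be a σ-finite measure space such that L¹(X, λ) is separable. Let (ν^n)_{n∈ℕ} be a sequence of Young measures on X such that for some p ∈ [1, ∞), sup_{n∈ℕ} ∫_X ∫_ℝ |ξ|^p dν^n_z(ξ) dλ(z) < ∞. Then there exist a Young measure ν on X and a strictly increasing sequence (n_k) of natural numbers such that for every λ-integrable h : X → ℝ and every bounded continuous φ : ℝ → ℝ, ∫_X h(z) ∫_ℝ φ(ξ) dν^{n_k}_z(ξ) dλ(z) → ∫_X h(z) ∫_ℝ φ(ξ) dν_z(ξ) dλ(z) as k → ∞. -/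
open MeasureTheory ProbabilityTheory Filter
open scoped ENNReal

/-!
Replace `λ` by an equivalent probability measure `m`. Countably many kernels into a countably
generated space are all measurable with respect to `σ(f)` for a single map `f` into a Polish space
`Y`, so each `ν^n` is encoded by the joint law on `Y × E` of `(f z, ξ)`, `z ∼ m`, `ξ ∼ ν^n_z`. The
first marginals of these laws are all equal and the second ones are tight: Prokhorov's theorem
gives a narrow limit point, and disintegrating it gives the limit kernel. Because the first
marginal is fixed, density of bounded continuous functions in `L¹` upgrades narrow convergence to
test functions `g(y) φ(ξ)` with `g` merely integrable, and an arbitrary `h ∈ L¹(λ)` reduces to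
such a `g` by conditioning `h · dλ/dm` on `σ(f)`.
-/

open scoped NNReal Topology BoundedContinuousFunction

section Tightness

variable {X E : Type*} [MeasurableSpace X] [TopologicalSpace E] [MeasurableSpace E]

theorem isTightMeasureSet_of_lintegral_le {V : E → ℝ≥0∞} (hV : Measurable V)
    (hV_coercive : Tendsto V (cocompact E) (𝓝 ∞)) {S : Set (Measure E)} {C : ℝ≥0∞} (hC : C ≠ ∞)
    (hS : ∀ μ ∈ S, ∫⁻ x, V x ∂μ ≤ C) : IsTightMeasureSet S := by
  rw [isTightMeasureSet_iff_exists_isCompact_measure_compl_le]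
  intro ε hε
  obtain ⟨N, hN_ne, hCN⟩ : ∃ N : ℕ, N ≠ 0 ∧ C / N ≤ ε := by
    have hlim : Tendsto (fun n : ℕ => C / (n : ℝ≥0∞)) atTop (𝓝 0) := by
      simpa using ENNReal.Tendsto.const_div ENNReal.tendsto_nat_nhds_top (Or.inr hC)
    exact ((eventually_ne_atTop 0).and (hlim.eventually (ge_mem_nhds hε))).exists
  have hV_large : {x | (N : ℝ≥0∞) ≤ V x} ∈ cocompact E :=
    hV_coercive.eventually (le_mem_nhds (ENNReal.natCast_lt_top N))
  obtain ⟨K, hK, hKV⟩ := mem_cocompact.1 hV_large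
  refine ⟨K, hK, fun μ hμ => ?_⟩
  calc μ Kᶜ ≤ μ {x | (N : ℝ≥0∞) ≤ V x} := measure_mono hKV
    _ ≤ (∫⁻ x, V x ∂μ) / N :=
      meas_ge_le_lintegral_div hV.aemeasurable (Nat.cast_ne_zero.2 hN_ne)
        (ENNReal.natCast_ne_top N)
    _ ≤ C / N := by gcongr; exact hS μ hμ
    _ ≤ ε := hCN

theorem tendsto_ofReal_abs_rpow_cocompact {p : ℝ} (hp : 0 < p) :
    Tendsto (fun x : ℝ => ENNReal.ofReal (|x| ^ p)) (cocompact ℝ) (𝓝 ∞) :=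
  ENNReal.tendsto_ofReal_atTop.comp ((tendsto_rpow_atTop hp).comp tendsto_norm_cocompact_atTop)

theorem isTightMeasureSet_range_comp_restrict {lam : Measure X} {ι : Type*}
    {ν : ι → Kernel X E} {V : E → ℝ≥0∞} (hV : Measurable V)
    (hV_coercive : Tendsto V (cocompact E) (𝓝 ∞)) {C : ℝ≥0∞} (hC : C ≠ ∞)
    (hν : ∀ i, ∫⁻ z, ∫⁻ ξ, V ξ ∂(ν i z) ∂lam ≤ C) (s : Set X) :
    IsTightMeasureSet (Set.range fun i => ν i ∘ₘ lam.restrict s) := by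
  refine isTightMeasureSet_of_lintegral_le hV hV_coercive hC ?_
  rintro _ ⟨i, rfl⟩
  rw [Measure.lintegral_bind (ν i).aemeasurable hV.aemeasurable]
  exact (setLIntegral_le_lintegral s _).trans (hν i)

theorem exists_measure_compl_le_restrict_le_smul {m lam : Measure X} [IsFiniteMeasure m]
    [SigmaFinite lam] (hm : m ≪ lam) {ε : ℝ≥0∞} (hε : 0 < ε) :
    ∃ s, MeasurableSet s ∧ lam s ≠ ∞ ∧ m sᶜ ≤ ε ∧
      ∃ c : ℝ≥0, m.restrict s ≤ c • lam.restrict s := by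
  let s (k : ℕ) : Set X := spanningSets lam k ∩ {z | m.rnDeriv lam z ≤ k}
  have hs_meas (k : ℕ) : MeasurableSet (s k) :=
    (measurableSet_spanningSets lam k).inter
      (measurableSet_le (Measure.measurable_rnDeriv m lam) measurable_const)
  have hs_mono : Monotone s := fun i j hij => Set.inter_subset_inter (spanningSets_mono hij)
    fun z hz => le_trans (show m.rnDeriv lam z ≤ i from hz) (Nat.cast_le.2 hij)
  have hs_cover : m (⋂ k, (s k)ᶜ) = 0 := by
    refine measure_mono_null (fun z hz => ?_) (ae_iff.1 (hm.ae_le (Measure.rnDeriv_lt_top m lam)))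
    intro hfin
    obtain ⟨N, hN⟩ := ENNReal.exists_nat_gt hfin.ne
    obtain ⟨M, hM⟩ := Set.mem_iUnion.1 (iUnion_spanningSets lam ▸ Set.mem_univ z)
    exact Set.mem_iInter.1 hz (max M N)
      ⟨spanningSets_mono (le_max_left M N) hM, hN.le.trans (Nat.cast_le.2 (le_max_right M N))⟩
  have hlim : Tendsto (fun k => m (s k)ᶜ) atTop (𝓝 0) := by
    rw [← hs_cover]
    exact tendsto_measure_iInter_atTop (fun k => (hs_meas k).compl.nullMeasurableSet)
      (fun i j hij => Set.compl_subset_compl.2 (hs_mono hij)) ⟨0, measure_ne_top _ _⟩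
  obtain ⟨k, hk⟩ := (hlim.eventually (ge_mem_nhds hε)).exists
  have hs_finite : lam (s k) < ∞ :=
    (measure_mono Set.inter_subset_left).trans_lt (measure_spanningSets_lt_top lam k)
  refine ⟨s k, hs_meas k, hs_finite.ne, hk, k, ?_⟩
  calc m.restrict (s k) = (lam.restrict (s k)).withDensity (m.rnDeriv lam) := by
        rw [← restrict_withDensity (hs_meas k), Measure.withDensity_rnDeriv_eq m lam hm]
    _ ≤ (lam.restrict (s k)).withDensity fun _ => k :=
        withDensity_mono (ae_restrict_of_forall_mem (hs_meas k) fun z hz => hz.2)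
    _ = (k : ℝ≥0) • lam.restrict (s k) := by
        rw [withDensity_const]; rfl

theorem isTightMeasureSet_range_comp_of_absolutelyContinuous [T2Space E] [OpensMeasurableSpace E]
    {m lam : Measure X} [IsFiniteMeasure m] [SigmaFinite lam] (hm : m ≪ lam)
    {ι : Type*} {ν : ι → Kernel X E} [∀ i, IsMarkovKernel (ν i)]
    (hν : ∀ s, MeasurableSet s → lam s ≠ ∞ →
      IsTightMeasureSet (Set.range fun i => ν i ∘ₘ lam.restrict s)) :
    IsTightMeasureSet (Set.range fun i => ν i ∘ₘ m) := by
  rw [isTightMeasureSet_iff_exists_isCompact_measure_compl_le]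
  intro ε hε
  obtain ⟨s, hs, hs_finite, hs_compl, c, hc⟩ :=
    exists_measure_compl_le_restrict_le_smul hm (ENNReal.half_pos hε.ne')
  obtain ⟨K, hK, hK_le⟩ :=
    isTightMeasureSet_iff_exists_isCompact_measure_compl_le.1 (hν s hs hs_finite) (ε / 2 / c)
      (ENNReal.div_pos (ENNReal.half_pos hε.ne').ne' ENNReal.coe_ne_top)
  have hK_meas : MeasurableSet Kᶜ := hK.measurableSet.compl
  refine ⟨K, hK, ?_⟩
  rintro _ ⟨i, rfl⟩
  have hK_le_i : ∫⁻ z in s, ν i z Kᶜ ∂lam ≤ ε / 2 / c := by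
    simpa only [Measure.bind_apply hK_meas (ν i).aemeasurable] using hK_le _ ⟨i, rfl⟩
  calc (ν i ∘ₘ m) Kᶜ = ∫⁻ z in s, ν i z Kᶜ ∂m + ∫⁻ z in sᶜ, ν i z Kᶜ ∂m := by
        rw [Measure.bind_apply hK_meas (ν i).aemeasurable, lintegral_add_compl _ hs]
    _ ≤ c * ∫⁻ z in s, ν i z Kᶜ ∂lam + ∫⁻ _ in sᶜ, 1 ∂m := by
        refine add_le_add ?_ (lintegral_mono fun z => prob_le_one)
        exact (lintegral_mono' hc le_rfl).trans_eq (lintegral_smul_measure _ _)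
    _ ≤ c * (ε / 2 / c) + ε / 2 := by
        gcongr
        simpa using hs_compl
    _ ≤ ε := by
        grw [ENNReal.mul_div_le, ENNReal.add_halves]

end Tightness

section ProductTestFunctions

variable {Y E : Type*} [MeasurableSpace Y] [TopologicalSpace E] [MeasurableSpace E]
  [OpensMeasurableSpace E]

theorem integrable_fst_mul_snd {μ : Measure (Y × E)} {g : Y → ℝ} (hg : Integrable g μ.fst)
    (φ : E →ᵇ ℝ) : Integrable (fun x => g x.1 * φ x.2) μ :=
  (hg.comp_measurable measurable_fst).mul_bdd (c := ‖φ‖)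
    (φ.continuous.measurable.comp measurable_snd).aestronglyMeasurable
    (ae_of_all _ fun x => φ.norm_coe_le_norm x.2)

theorem dist_integral_fst_mul_snd_le {μ : Measure (Y × E)} {g g' : Y → ℝ}
    (hg : Integrable g μ.fst) (hg' : Integrable g' μ.fst) (φ : E →ᵇ ℝ) :
    dist (∫ x, g x.1 * φ x.2 ∂μ) (∫ x, g' x.1 * φ x.2 ∂μ) ≤ (∫ y, ‖g y - g' y‖ ∂μ.fst) * ‖φ‖ := by
  have hsub : Integrable (fun y => ‖g y - g' y‖) μ.fst := (hg.sub hg').norm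
  rw [dist_eq_norm, ← integral_sub (integrable_fst_mul_snd hg φ) (integrable_fst_mul_snd hg' φ),
    Measure.fst, integral_map measurable_fst.aemeasurable hsub.aestronglyMeasurable,
    ← integral_mul_const]
  refine norm_integral_le_of_norm_le ((hsub.comp_measurable measurable_fst).mul_const _)
    (ae_of_all _ fun x => ?_)
  rw [← sub_mul, norm_mul]
  gcongr
  exact φ.norm_coe_le_norm x.2

end ProductTestFunctions

section FixedFirstMarginal

variable {Y E : Type*} [TopologicalSpace Y] [MeasurableSpace Y] [BorelSpace Y]
  [TopologicalSpace E] [MeasurableSpace E]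

theorem fst_eq_of_tendsto [HasOuterApproxClosed Y] [OpensMeasurableSpace (Y × E)] {ι : Type*}
    {l : Filter ι} [l.NeBot] {P : Measure Y} {μ : ι → ProbabilityMeasure (Y × E)}
    {μ₀ : ProbabilityMeasure (Y × E)} (hμ : Tendsto μ l (𝓝 μ₀))
    (hfst : ∀ i, (μ i : Measure (Y × E)).fst = P) : (μ₀ : Measure (Y × E)).fst = P := by
  obtain ⟨i₀⟩ := l.nonempty_of_neBot
  have hmap : Tendsto (fun i => (μ i).map measurable_fst.aemeasurable) l
      (𝓝 (μ₀.map measurable_fst.aemeasurable)) :=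
    ((ProbabilityMeasure.continuous_map continuous_fst).tendsto μ₀).comp hμ
  have hconst (i : ι) :
      (μ i).map measurable_fst.aemeasurable = (μ i₀).map measurable_fst.aemeasurable :=
    Subtype.ext ((hfst i).trans (hfst i₀).symm)
  simp only [hconst] at hmap
  have hmap_eq : μ₀.map measurable_fst.aemeasurable = (μ i₀).map measurable_fst.aemeasurable :=
    tendsto_nhds_unique hmap tendsto_const_nhds
  exact (congrArg ProbabilityMeasure.toMeasure hmap_eq).trans (hfst i₀)

theorem exists_subseq_tendsto_compProd [PolishSpace Y] [PolishSpace E] [BorelSpace E]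
    {P : Measure Y} [IsProbabilityMeasure P] {μ : ℕ → ProbabilityMeasure (Y × E)}
    (hfst : ∀ n, (μ n : Measure (Y × E)).fst = P)
    (hsnd : IsTightMeasureSet (Set.range fun n => (μ n : Measure (Y × E)).snd)) :
    ∃ (κ : Kernel Y E) (_ : IsMarkovKernel κ) (nk : ℕ → ℕ), StrictMono nk ∧
      Tendsto (fun k => μ (nk k)) atTop (𝓝 ⟨P ⊗ₘ κ, inferInstance⟩) := by
  have : Nonempty E := (μ 0).nonempty.map Prod.snd
  have htight : IsTightMeasureSet {(ρ : Measure (Y × E)) | ρ ∈ Set.range μ} := by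
    refine IsTightMeasureSet.prodMk ?_ ?_
    · refine (isTightMeasureSet_singleton (μ := P)).subset ?_
      rintro _ ⟨_, ⟨_, ⟨n, rfl⟩, rfl⟩, rfl⟩
      exact hfst n
    · refine hsnd.subset ?_
      rintro _ ⟨_, ⟨_, ⟨n, rfl⟩, rfl⟩, rfl⟩
      exact ⟨n, rfl⟩
  obtain ⟨ρ, -, nk, hnk, hlim⟩ := (isCompact_closure_of_isTightMeasureSet htight).tendsto_subseq
    (fun n => subset_closure (Set.mem_range_self n))
  have hρ_fst : (ρ : Measure (Y × E)).fst = P := fst_eq_of_tendsto hlim fun k => hfst (nk k)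
  have hρ : ρ = ⟨P ⊗ₘ (ρ : Measure (Y × E)).condKernel, inferInstance⟩ :=
    Subtype.ext (by simp [← hρ_fst, Measure.disintegrate])
  exact ⟨(ρ : Measure (Y × E)).condKernel, inferInstance, nk, hnk, hρ ▸ hlim⟩

theorem tendsto_integral_fst_mul_snd [TopologicalSpace.PseudoMetrizableSpace Y]
    [OpensMeasurableSpace E] [OpensMeasurableSpace (Y × E)] {ι : Type*} {l : Filter ι}
    {P : Measure Y} [IsFiniteMeasure P] {μ : ι → ProbabilityMeasure (Y × E)}
    {μ₀ : ProbabilityMeasure (Y × E)}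
    (hμ : Tendsto μ l (𝓝 μ₀)) (hfst : ∀ i, (μ i : Measure (Y × E)).fst = P)
    (hfst₀ : (μ₀ : Measure (Y × E)).fst = P) {g : Y → ℝ} (hg : Integrable g P) (φ : E →ᵇ ℝ) :
    Tendsto (fun i => ∫ x, g x.1 * φ x.2 ∂(μ i : Measure (Y × E))) l
      (𝓝 (∫ x, g x.1 * φ x.2 ∂(μ₀ : Measure (Y × E)))) := by
  let I (u : Y → ℝ) (ρ : ProbabilityMeasure (Y × E)) : ℝ :=
    ∫ x, u x.1 * φ x.2 ∂(ρ : Measure (Y × E))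
  change Tendsto (fun i => I g (μ i)) l (𝓝 (I g μ₀))
  rw [Metric.tendsto_nhds]
  intro ε hε
  obtain ⟨G, hgG, hG⟩ :=
    hg.exists_boundedContinuous_integral_sub_le (ε := ε / (4 * (‖φ‖ + 1))) (by positivity)
  have happrox (ρ : ProbabilityMeasure (Y × E)) (hρ : (ρ : Measure (Y × E)).fst = P) :
      dist (I g ρ) (I G ρ) ≤ ε / 4 := by
    subst hρ
    calc dist (I g ρ) (I G ρ)
        ≤ (∫ y, ‖g y - G y‖ ∂(ρ : Measure (Y × E)).fst) * ‖φ‖ :=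
          dist_integral_fst_mul_snd_le hg hG φ
      _ ≤ ε / (4 * (‖φ‖ + 1)) * (‖φ‖ + 1) := by gcongr; linarith
      _ = ε / 4 := by field_simp
  have hlim : Tendsto (fun i => I G (μ i)) l (𝓝 (I G μ₀)) :=
    ProbabilityMeasure.tendsto_iff_forall_integral_tendsto.1 hμ
      (G.compContinuous ⟨Prod.fst, continuous_fst⟩ * φ.compContinuous ⟨Prod.snd, continuous_snd⟩)
  filter_upwards [Metric.tendsto_nhds.1 hlim (ε / 4) (by positivity)] with i hi
  calc dist (I g (μ i)) (I g μ₀)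
      ≤ dist (I g (μ i)) (I G (μ i)) + dist (I G (μ i)) (I G μ₀) + dist (I G μ₀) (I g μ₀) :=
        dist_triangle4 _ _ _ _
    _ ≤ ε / 4 + ε / 4 + ε / 4 := by
        grw [happrox (μ i) (hfst i), hi, dist_comm (I G μ₀), happrox μ₀ hfst₀]
    _ < ε := by linarith

end FixedFirstMarginal

section Factorization

variable {X : Type*} [MeasurableSpace X]

open MeasurableSpace in
theorem exists_measurable_forall_measurable_comap {E : Type*} [MeasurableSpace E]
    [CountablyGenerated E] {ι : Type*} (ν : ι → Kernel X E) [∀ i, IsMarkovKernel (ν i)] :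
    ∃ A : Set (Set E), A.Countable ∧ ∃ f : X → ι → A → ℝ≥0∞,
      Measurable f ∧ ∀ i, Measurable[MeasurableSpace.comap f inferInstance] (ν i) := by
  let A : Set (Set E) := generateSetAlgebra (countableGeneratingSet E)
  have hA : generateFrom A = ‹MeasurableSpace E› := by
    rw [generateFrom_generateSetAlgebra_eq, generateFrom_countableGeneratingSet]
  let f (z : X) (i : ι) (s : A) : ℝ≥0∞ := ν i z s
  refine ⟨A, countable_generateSetAlgebra countable_countableGeneratingSet, f,
    measurable_pi_lambda _ fun i => measurable_pi_lambda _ fun s =>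
      (ν i).measurable_coe (hA ▸ measurableSet_generateFrom s.2), fun i => ?_⟩
  refine Measurable.measure_of_isPiSystem_of_isProbabilityMeasure hA.symm
    isSetAlgebra_generateSetAlgebra.isSetRing.isSetSemiring.isPiSystem fun s hs => ?_
  exact (measurable_pi_apply ⟨s, hs⟩).comp ((measurable_pi_apply i).comp (comap_measurable f))

theorem exists_integrable_map_forall_integral_mul_eq {Y : Type*} [MeasurableSpace Y]
    {m lam : Measure X} [IsFiniteMeasure m] [SigmaFinite lam] (hlam : lam ≪ m) {f : X → Y}
    (hf : Measurable f) {h : X → ℝ} (hh : Integrable h lam) :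
    ∃ g : Y → ℝ, Integrable g (m.map f) ∧ ∀ (ψ : X → ℝ) (c : ℝ),
      StronglyMeasurable[MeasurableSpace.comap f inferInstance] ψ → (∀ z, ‖ψ z‖ ≤ c) →
        ∫ z, h z * ψ z ∂lam = ∫ z, g (f z) * ψ z ∂m := by
  let D (z : X) : ℝ := (lam.rnDeriv m z).toReal * h z
  have hD : Integrable D m := (integrable_toReal_rnDeriv_mul_iff hlam).2 hh
  obtain ⟨g, hg_meas, hg⟩ := (stronglyMeasurable_condExp
    (f := D) (m := MeasurableSpace.comap f inferInstance) (μ := m)).exists_eq_measurable_comp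
  refine ⟨g, ?_, fun ψ c hψ hψ_le => ?_⟩
  · rw [integrable_map_measure hg_meas.aestronglyMeasurable hf.aemeasurable, ← hg]
    exact integrable_condExp
  have hDψ : Integrable (D * ψ) m :=
    hD.mul_bdd (hψ.mono hf.comap_le).aestronglyMeasurable (ae_of_all _ hψ_le)
  calc ∫ z, h z * ψ z ∂lam = ∫ z, (D * ψ) z ∂m := by
        simp_rw [← integral_toReal_rnDeriv_mul hlam, Pi.mul_apply, D, mul_assoc]
    _ = ∫ z, (m[D * ψ | MeasurableSpace.comap f inferInstance]) z ∂m :=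
        (integral_condExp hf.comap_le).symm
    _ = ∫ z, g (f z) * ψ z ∂m := by
        refine integral_congr_ae ?_
        filter_upwards [condExp_mul_of_stronglyMeasurable_right hψ hDψ hD] with z hz
        rw [hz, hg, Pi.mul_apply, Function.comp_apply]

end Factorization

section JointLaw

variable {X Y E : Type*} [MeasurableSpace X] [MeasurableSpace Y] [MeasurableSpace E]

/-- The joint law of `(f z, ξ)`, where `z` is distributed according to `m` and, given `z`, `ξ` is
distributed according to `ν z`. It is meaningful for measurable `f` and s-finite `m`, `ν`: `⊗ₘ` and
`Measure.map` return `0` outside their domains. -/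
noncomputable def jointLaw (m : Measure X) (f : X → Y) (ν : Kernel X E) : Measure (Y × E) :=
  (m ⊗ₘ ν).map (Prod.map f id)

variable {m : Measure X} {f : X → Y}

theorem isProbabilityMeasure_jointLaw [IsProbabilityMeasure m] (hf : Measurable f)
    (ν : Kernel X E) [IsMarkovKernel ν] : IsProbabilityMeasure (jointLaw m f ν) :=
  Measure.isProbabilityMeasure_map (hf.prodMap measurable_id).aemeasurable

theorem fst_jointLaw [SFinite m] (hf : Measurable f) (ν : Kernel X E) [IsMarkovKernel ν] :
    (jointLaw m f ν).fst = m.map f := by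
  rw [jointLaw, Measure.fst, Measure.map_map measurable_fst (hf.prodMap measurable_id),
    Prod.map_fst', ← Measure.map_map hf measurable_fst]
  exact congrArg _ (Measure.fst_compProd m ν)

theorem snd_jointLaw [SFinite m] (hf : Measurable f) (ν : Kernel X E) [IsSFiniteKernel ν] :
    (jointLaw m f ν).snd = ν ∘ₘ m := by
  rw [jointLaw, Measure.snd, Measure.map_map measurable_snd (hf.prodMap measurable_id),
    Prod.map_snd', Function.id_comp]
  exact Measure.snd_compProd m ν

theorem jointLaw_comap [SFinite m] (hf : Measurable f) (κ : Kernel Y E) [IsSFiniteKernel κ] :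
    jointLaw m f (κ.comap f hf) = m.map f ⊗ₘ κ := by
  ext s hs
  rw [jointLaw, Measure.map_apply (hf.prodMap measurable_id) hs,
    Measure.compProd_apply (hf.prodMap measurable_id hs), Measure.compProd_apply hs,
    lintegral_map (Kernel.measurable_kernel_prodMk_left hs) hf]
  rfl

theorem integral_jointLaw [TopologicalSpace E] [OpensMeasurableSpace E] [SFinite m]
    (hf : Measurable f) (ν : Kernel X E) [IsMarkovKernel ν] {g : Y → ℝ}
    (hg : Integrable g (m.map f)) (φ : E →ᵇ ℝ) :
    ∫ x, g x.1 * φ x.2 ∂jointLaw m f ν = ∫ z, g (f z) * ∫ ξ, φ ξ ∂ν z ∂m := by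
  have hint : Integrable (fun x => g x.1 * φ x.2) (jointLaw m f ν) :=
    integrable_fst_mul_snd (by rwa [fst_jointLaw hf]) φ
  have hmap : AEMeasurable (Prod.map f id) (m ⊗ₘ ν) := (hf.prodMap measurable_id).aemeasurable
  rw [jointLaw] at hint ⊢
  rw [integral_map hmap hint.aestronglyMeasurable]
  refine (Measure.integral_compProd (hint.comp_aemeasurable hmap)).trans ?_
  simp only [Function.comp_apply, Prod.map, id, integral_const_mul]

theorem exists_integrable_forall_integral_eq_integral_jointLaw [TopologicalSpace E]
    [OpensMeasurableSpace E] [IsFiniteMeasure m] {lam : Measure X} [SigmaFinite lam]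
    (hlam : lam ≪ m) (hf : Measurable f) {h : X → ℝ} (hh : Integrable h lam) :
    ∃ g : Y → ℝ, Integrable g (m.map f) ∧ ∀ (ν : Kernel X E) [IsMarkovKernel ν],
      Measurable[MeasurableSpace.comap f inferInstance] ν → ∀ φ : E →ᵇ ℝ,
        ∫ z, h z * ∫ ξ, φ ξ ∂ν z ∂lam = ∫ x, g x.1 * φ x.2 ∂jointLaw m f ν := by
  obtain ⟨g, hg, hg_eq⟩ := exists_integrable_map_forall_integral_mul_eq hlam hf hh
  refine ⟨g, hg, fun ν _ hν φ => ?_⟩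
  let ν' : @Kernel X E (MeasurableSpace.comap f inferInstance) _ :=
    @Kernel.mk X E (MeasurableSpace.comap f inferInstance) _ ν hν
  rw [integral_jointLaw hf ν hg φ]
  refine hg_eq _ ‖φ‖ ?_ fun z => φ.norm_integral_le_norm (ν z)
  exact StronglyMeasurable.integral_kernel (κ := ν') φ.continuous.measurable.stronglyMeasurable

theorem exists_subseq_tendsto_integral_jointLaw [TopologicalSpace Y] [PolishSpace Y] [BorelSpace Y]
    [TopologicalSpace E] [PolishSpace E] [BorelSpace E] [IsProbabilityMeasure m]
    (hf : Measurable f) {ν : ℕ → Kernel X E} [∀ n, IsMarkovKernel (ν n)]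
    (hν : IsTightMeasureSet (Set.range fun n => ν n ∘ₘ m)) :
    ∃ (κ : Kernel Y E) (_ : IsMarkovKernel κ) (nk : ℕ → ℕ), StrictMono nk ∧
      ∀ g : Y → ℝ, Integrable g (m.map f) → ∀ φ : E →ᵇ ℝ,
        Tendsto (fun k => ∫ x, g x.1 * φ x.2 ∂jointLaw m f (ν (nk k))) atTop
          (𝓝 (∫ x, g x.1 * φ x.2 ∂jointLaw m f (κ.comap f hf))) := by
  have : IsProbabilityMeasure (m.map f) := Measure.isProbabilityMeasure_map hf.aemeasurable
  let μ (n : ℕ) : ProbabilityMeasure (Y × E) :=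
    ⟨jointLaw m f (ν n), isProbabilityMeasure_jointLaw hf (ν n)⟩
  have hμ_fst (n : ℕ) : (μ n : Measure (Y × E)).fst = m.map f := fst_jointLaw hf (ν n)
  have hμ_snd : IsTightMeasureSet (Set.range fun n => (μ n : Measure (Y × E)).snd) := by
    simpa only [μ, ProbabilityMeasure.coe_mk, snd_jointLaw hf] using hν
  obtain ⟨κ, hκ, nk, hnk, hlim⟩ := exists_subseq_tendsto_compProd hμ_fst hμ_snd
  refine ⟨κ, hκ, nk, hnk, fun g hg φ => ?_⟩
  rw [jointLaw_comap hf]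
  exact tendsto_integral_fst_mul_snd hlim (fun k => hμ_fst (nk k)) (Measure.fst_compProd _ κ) hg φ

end JointLaw

theorem youngMeasure_compactness_narrow_general {X E : Type*} [MeasurableSpace X]
    [TopologicalSpace E] [PolishSpace E] [MeasurableSpace E] [BorelSpace E] (lam : Measure X)
    [SigmaFinite lam] (nu : ℕ → Kernel X E) [∀ n, IsMarkovKernel (nu n)]
    (htight : ∀ s, MeasurableSet s → lam s ≠ ∞ →
      IsTightMeasureSet (Set.range fun n => nu n ∘ₘ lam.restrict s)) :
    ∃ nulim : Kernel X E, IsMarkovKernel nulim ∧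
      ∃ nk : ℕ → ℕ, StrictMono nk ∧ ∀ h : X → ℝ, Integrable h lam → ∀ φ : E →ᵇ ℝ,
        Tendsto (fun k => ∫ z, h z * ∫ ξ, φ ξ ∂nu (nk k) z ∂lam) atTop
          (𝓝 (∫ z, h z * ∫ ξ, φ ξ ∂nulim z ∂lam)) := by
  obtain rfl | hlam := eq_zero_or_neZero lam
  · exact ⟨nu 0, inferInstance, id, strictMono_id, by simp⟩
  obtain ⟨A, hA, f, hf, hnu_comap⟩ := exists_measurable_forall_measurable_comap nu
  have : Countable A := hA
  obtain ⟨κ, _, nk, hnk, hlim⟩ := exists_subseq_tendsto_integral_jointLaw hf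
    (isTightMeasureSet_range_comp_of_absolutelyContinuous
      (toFinite_absolutelyContinuous lam) htight)
  refine ⟨κ.comap f hf, inferInstance, nk, hnk, fun h hh φ => ?_⟩
  obtain ⟨g, hg, hg_eq⟩ := exists_integrable_forall_integral_eq_integral_jointLaw (E := E)
    (absolutelyContinuous_toFinite lam) hf hh
  simp only [hg_eq _ (hnu_comap _),
    hg_eq (κ.comap f hf) (κ.measurable.comp (comap_measurable f))]
  exact hlim g hg φ

/-- Compactness of Young measures, first part: on a σ-finite measure space with separable
`L¹`, any sequence of Young measures with uniformly bounded `p`-moments admits a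
subsequence converging to a Young measure `ν`, in the sense that
`∫_X h(z) ∫_ℝ φ(ξ) dν^{n_k}_z(ξ) dλ(z) → ∫_X h(z) ∫_ℝ φ(ξ) dν_z(ξ) dλ(z)` for every
integrable `h` and every bounded continuous `φ`. -/
theorem youngMeasure_compactness_narrow {X : Type*} [MeasurableSpace X] (lam : Measure X)
    [SigmaFinite lam] [TopologicalSpace.SeparableSpace (Lp ℝ 1 lam)]
    (nu : ℕ → Kernel X ℝ) [∀ n, IsMarkovKernel (nu n)]
    (p : ℝ) (hp : 1 ≤ p)
    (hbound : ∃ C : ℝ≥0∞, C < ⊤ ∧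
      ∀ n, (∫⁻ z, (∫⁻ ξ, ENNReal.ofReal (|ξ| ^ p) ∂(nu n z)) ∂lam) ≤ C) :
    ∃ nulim : Kernel X ℝ, IsMarkovKernel nulim ∧
      ∃ nk : ℕ → ℕ, StrictMono nk ∧
        ∀ h : X → ℝ, Integrable h lam →
          ∀ φ : ℝ → ℝ, Continuous φ → (∃ B : ℝ, ∀ x, |φ x| ≤ B) →
            Tendsto (fun k => ∫ z, h z * (∫ ξ, φ ξ ∂(nu (nk k) z)) ∂lam) atTop
              (nhds (∫ z, h z * (∫ ξ, φ ξ ∂(nulim z)) ∂lam)) := by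
  obtain ⟨C, hC, hmoment⟩ := hbound
  obtain ⟨nulim, hnulim, nk, hnk, hlim⟩ := youngMeasure_compactness_narrow_general lam nu
    fun s _ _ => isTightMeasureSet_range_comp_restrict (by fun_prop)
      (tendsto_ofReal_abs_rpow_cocompact (zero_lt_one.trans_le hp)) hC.ne hmoment s
  refine ⟨nulim, hnulim, nk, hnk, fun h hh φ hφ ⟨B, hB⟩ => ?_⟩
  exact hlim h hh (BoundedContinuousFunction.ofNormedAddCommGroup φ hφ B hB)
end

section
/- (Measure-theoretic core of the Reduction Theorem.) Let (X, λ) be a σ-finite measure space and let ν be a Young measure on X with kinetic function F(z, ξ) = ν_z((ξ, ∞)). If F(z, ξ)(1 − F(z, ξ)) = 0 for λ ⊗ Leb-almost every (z, ξ) ∈ X × ℝ, then there exists a measurable function u : X → ℝ such that ν_z = δ_{u(z)} for λ-almost every z ∈ X; equivalently, F(z, ξ) = 1_{u(z)>ξ} for λ ⊗ Leb-almost every (z, ξ). -/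
open MeasureTheory ProbabilityTheory

/-!
For almost every `z`, the function `F(z, ·)` is `0` or `1` on a set of full Lebesgue measure, hence
on a dense set. If the support of `ν_z` contained two points `x < y`, then at a point of that set
between them `F(z, ·)` would lie strictly between `0` and `1`. Hence the support is a single point
`u(z)` and `ν_z = δ_{u(z)}`. Measurability of `u` comes from that of `z ↦ ν_z(A)`, since
`u⁻¹(A) = {z | ν_z(A) = 1}` wherever `ν_z` is Dirac.
-/

section OneMeasure

variable {E : Type*} [MeasurableSpace E] {μ : Measure E}

lemma measureReal_mul_one_sub_eq_zero_iff [IsProbabilityMeasure μ] {s : Set E}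
    (hs : MeasurableSet s) : μ.real s * (1 - μ.real s) = 0 ↔ μ s = 0 ∨ μ sᶜ = 0 := by
  rw [← probReal_compl_eq_one_sub hs, mul_eq_zero, measureReal_eq_zero_iff,
    measureReal_eq_zero_iff]

lemma eq_dirac_of_ae_eq [IsProbabilityMeasure μ] {c : E} (h : ∀ᵐ x ∂μ, x = c) :
    μ = Measure.dirac c :=
  calc μ = μ.map id := Measure.map_id.symm
    _ = μ.map (fun _ ↦ c) := Measure.map_congr h
    _ = Measure.dirac c := by rw [Measure.map_const, measure_univ, one_smul]

lemma exists_eq_dirac_of_subsingleton_support [TopologicalSpace E] [HereditarilyLindelofSpace E]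
    [IsProbabilityMeasure μ] (h : μ.support.Subsingleton) : ∃ c, μ = Measure.dirac c := by
  obtain ⟨c, hc⟩ := Measure.nonempty_support (IsProbabilityMeasure.ne_zero μ)
  refine ⟨c, eq_dirac_of_ae_eq ?_⟩
  filter_upwards [Measure.support_mem_ae (μ := μ)] with x hx using h hx hc

variable [LinearOrder E] [TopologicalSpace E] [OrderClosedTopology E]

lemma subsingleton_support_of_dense [DenselyOrdered E] {D : Set E} (hD : Dense D)
    (h : ∀ d ∈ D, μ (Set.Ioi d) = 0 ∨ μ (Set.Iic d) = 0) : μ.support.Subsingleton := by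
  have not_lt_of_mem : ∀ x ∈ μ.support, ∀ y ∈ μ.support, ¬ x < y := by
    intro x hx y hy hxy
    obtain ⟨d, hdD, hxd, hdy⟩ := hD.exists_between hxy
    have below : 0 < μ (Set.Iic d) :=
      (Measure.mem_support_iff_forall x).1 hx _ (Iic_mem_nhds hxd)
    have above : 0 < μ (Set.Ioi d) :=
      (Measure.mem_support_iff_forall y).1 hy _ (Ioi_mem_nhds hdy)
    exact (h d hdD).elim above.ne' below.ne'
  exact fun x hx y hy ↦
    le_antisymm (not_lt.1 (not_lt_of_mem y hy x hx)) (not_lt.1 (not_lt_of_mem x hx y hy))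

lemma exists_eq_dirac_of_ae_measureReal_Ioi [DenselyOrdered E] [HereditarilyLindelofSpace E]
    [OpensMeasurableSpace E] [IsProbabilityMeasure μ] {ρ : Measure E} [ρ.IsOpenPosMeasure]
    (h : ∀ᵐ ξ ∂ρ, μ.real (Set.Ioi ξ) * (1 - μ.real (Set.Ioi ξ)) = 0) :
    ∃ c, μ = Measure.dirac c := by
  refine exists_eq_dirac_of_subsingleton_support
    (subsingleton_support_of_dense (Measure.dense_of_ae h) fun ξ hξ ↦ ?_)
  simpa only [Set.compl_Ioi] using (measureReal_mul_one_sub_eq_zero_iff measurableSet_Ioi).1 hξ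

lemma measureReal_dirac_Ioi [OpensMeasurableSpace E] (c ξ : E) :
    (Measure.dirac c).real (Set.Ioi ξ) = (Set.Iio c).indicator (fun _ ↦ (1 : ℝ)) ξ := by
  by_cases hξ : ξ < c <;>
    simp [measureReal_def, Measure.dirac_apply' c measurableSet_Ioi, hξ]

end OneMeasure

section DiracKernel

variable {X E : Type*} [MeasurableSpace X] [MeasurableSpace E]

lemma measurable_of_forall_kernel_eq_dirac (κ : Kernel X E) {u : X → E}
    (h : ∀ z, κ z = Measure.dirac (u z)) : Measurable u := by
  intro A hA
  have preimage_eq : u ⁻¹' A = (fun z ↦ κ z A) ⁻¹' {1} := by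
    ext z
    rw [Set.mem_preimage, Set.mem_preimage, Set.mem_singleton_iff, h z,
      Measure.dirac_apply' _ hA]
    exact (Set.indicator_eq_one_iff_mem ENNReal).symm
  rw [preimage_eq]
  exact κ.measurable_coe hA (measurableSet_singleton 1)

lemma exists_measurable_ae_kernel_eq_dirac [Nonempty E] {lam : Measure X} (κ : Kernel X E)
    (h : ∀ᵐ z ∂lam, ∃ c, κ z = Measure.dirac c) :
    ∃ u : X → E, Measurable u ∧ ∀ᵐ z ∂lam, κ z = Measure.dirac (u z) := by
  obtain ⟨s, hs_ae, hs, hdirac⟩ := h.exists_measurable_mem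
  choose v hv using fun z : s ↦ hdirac z z.2
  have hv_meas : Measurable v :=
    measurable_of_forall_kernel_eq_dirac (κ.comap Subtype.val measurable_subtype_coe) hv
  obtain ⟨u, hu, huv⟩ :=
    (MeasurableEmbedding.subtype_coe hs).exists_measurable_extend hv_meas fun _ ↦ ‹Nonempty E›
  refine ⟨u, hu, ?_⟩
  filter_upwards [hs_ae] with z hz
  rw [hv ⟨z, hz⟩, ← huv, Function.comp_apply]

end DiracKernel

theorem reduction_young_measure_dirac_general {X E : Type*} [MeasurableSpace X] [Nonempty E]
    [LinearOrder E] [DenselyOrdered E] [TopologicalSpace E] [OrderClosedTopology E]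
    [HereditarilyLindelofSpace E] [MeasurableSpace E] [OpensMeasurableSpace E]
    (lam : Measure X) (rho : Measure E) [SFinite rho] [rho.IsOpenPosMeasure]
    (nu : Kernel X E) [IsMarkovKernel nu]
    (h : ∀ᵐ q : X × E ∂(lam.prod rho),
      (nu q.1).real (Set.Ioi q.2) * (1 - (nu q.1).real (Set.Ioi q.2)) = 0) :
    ∃ u : X → E, Measurable u ∧
      (∀ᵐ z ∂lam, nu z = Measure.dirac (u z)) ∧
      (∀ᵐ q : X × E ∂(lam.prod rho),
        (nu q.1).real (Set.Ioi q.2) =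
          Set.indicator (Set.Iio (u q.1)) (fun _ ↦ (1 : ℝ)) q.2) := by
  have exists_dirac : ∀ᵐ z ∂lam, ∃ c, nu z = Measure.dirac c :=
    (Measure.ae_ae_of_ae_prod h).mono fun _ hz ↦ exists_eq_dirac_of_ae_measureReal_Ioi hz
  obtain ⟨u, hu, hdirac⟩ := exists_measurable_ae_kernel_eq_dirac nu exists_dirac
  refine ⟨u, hu, hdirac, ?_⟩
  filter_upwards [Measure.quasiMeasurePreserving_fst.ae hdirac] with q hq
  rw [hq, measureReal_dirac_Ioi]

/-- Measure-theoretic core of the Reduction Theorem: if the kinetic function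
`F(z, ξ) = ν_z((ξ, ∞))` of a Young measure `ν` on a σ-finite measure space satisfies
`F(1 - F) = 0` almost everywhere with respect to `λ ⊗ Leb`, then `ν` is a.e. a Dirac mass
`δ_{u(z)}` for some measurable `u : X → ℝ`; equivalently `F(z, ξ) = 1_{u(z)>ξ}` a.e. -/
theorem reduction_young_measure_dirac {X : Type*} [MeasurableSpace X] (lam : Measure X)
    [SigmaFinite lam] (nu : Kernel X ℝ) [IsMarkovKernel nu]
    (h : ∀ᵐ q : X × ℝ ∂(lam.prod volume),
      (nu q.1 (Set.Ioi q.2)).toReal * (1 - (nu q.1 (Set.Ioi q.2)).toReal) = 0) :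
    ∃ u : X → ℝ, Measurable u ∧
      (∀ᵐ z ∂lam, nu z = Measure.dirac (u z)) ∧
      (∀ᵐ q : X × ℝ ∂(lam.prod volume),
        (nu q.1 (Set.Ioi q.2)).toReal =
          Set.indicator (Set.Iio (u q.1)) (fun _ => (1 : ℝ)) q.2) :=
  reduction_young_measure_dirac_general lam volume nu h
end

section
/- (Nonnegativity of the BGK defect measure.) Let F : ℝ → ℝ be measurable with 0 ≤ F(ξ) ≤ 1 for all ξ, and suppose that ξ ↦ F(ξ) − 1_{0>ξ} is Lebesgue-integrable on ℝ. Define the local density u := ∫_ℝ (F(ζ) − 1_{0>ζ}) dζ and m(ξ) := ∫_{−∞}^ξ (1_{u>ζ} − F(ζ)) dζ. Then ∫_ℝ (1_{u>ζ} − F(ζ)) dζ = 0 and m(ξ) ≥ 0 for every ξ ∈ ℝ. -/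
open MeasureTheory

/-!
Below the density `u` the integrand `1_{u>ζ} - F(ζ) = 1 - F(ζ)` is nonnegative, and from `u` on it
is `-F(ζ) ≤ 0`. Replacing `1_{0>ζ}` by `1_{u>ζ}` changes the integral by exactly `u`, so the total
integral vanishes. Hence `m(ξ)` integrates a nonnegative function when `ξ ≤ u`, and equals
`∫_ξ^∞ F ≥ 0` when `ξ ≥ u`.
-/

theorem indicator_Iio_sub_indicator_Iio_of_le {α E : Type*} [LinearOrder α] [AddGroup E]
    {a b : α} (hab : a ≤ b) (f : α → E) :
    (fun x => (Set.Iio b).indicator f x - (Set.Iio a).indicator f x) =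
      (Set.Ico a b).indicator f := by
  rw [← Set.Iio_sdiff_Iio, Set.indicator_sdiff (Set.Iio_subset_Iio hab)]
  rfl

section Integrability

variable {α E : Type*} [LinearOrder α] [TopologicalSpace α] [OrderClosedTopology α]
  [CompactIccSpace α] [MeasurableSpace α] [OpensMeasurableSpace α] [NormedAddCommGroup E]
  {μ : Measure α} [IsFiniteMeasureOnCompacts μ]

theorem integrable_indicator_Iio_sub_indicator_Iio (a b : α) (c : E) :
    Integrable (fun x => (Set.Iio b).indicator (fun _ => c) x
      - (Set.Iio a).indicator (fun _ => c) x) μ := by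
  wlog hab : a ≤ b generalizing a b
  · simpa only [Pi.neg_def, neg_sub] using (this b a (le_of_not_ge hab)).neg
  rw [indicator_Iio_sub_indicator_Iio_of_le hab, integrable_indicator_iff measurableSet_Ico]
  have measure_Ico_lt_top : μ (Set.Ico a b) < ⊤ :=
    (measure_mono Set.Ico_subset_Icc_self).trans_lt isCompact_Icc.measure_lt_top
  exact integrableOn_const measure_Ico_lt_top.ne

theorem integrable_indicator_Iio_sub {F : α → E} {a : α} {c : E}
    (hF : Integrable (fun x => F x - (Set.Iio a).indicator (fun _ => c) x) μ) (b : α) :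
    Integrable (fun x => (Set.Iio b).indicator (fun _ => c) x - F x) μ := by
  simpa only [Pi.sub_def, sub_sub, add_sub_cancel] using
    (integrable_indicator_Iio_sub_indicator_Iio a b c).sub hF

end Integrability

section Lebesgue

variable {E : Type*} [NormedAddCommGroup E] [NormedSpace ℝ E] [CompleteSpace E]

theorem integral_indicator_Iio_sub_indicator_Iio (a b : ℝ) (c : E) :
    ∫ x, ((Set.Iio b).indicator (fun _ => c) x - (Set.Iio a).indicator (fun _ => c) x)
      = (b - a) • c := by
  wlog hab : a ≤ b generalizing a b
  · have swapped := this b a (le_of_not_ge hab)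
    rw [← neg_sub a b, neg_smul, ← swapped, ← integral_neg]
    simp only [neg_sub]
  rw [indicator_Iio_sub_indicator_Iio_of_le hab, integral_indicator_const c measurableSet_Ico,
    Real.volume_real_Ico_of_le hab]

theorem integral_indicator_Iio_sub {F : ℝ → E} {a : ℝ} {c : E}
    (hF : Integrable (fun x => F x - (Set.Iio a).indicator (fun _ => c) x)) (b : ℝ) :
    ∫ x, ((Set.Iio b).indicator (fun _ => c) x - F x)
      = (b - a) • c - ∫ x, (F x - (Set.Iio a).indicator (fun _ => c) x) := by
  rw [← integral_indicator_Iio_sub_indicator_Iio,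
    ← integral_sub (integrable_indicator_Iio_sub_indicator_Iio a b c) hF]
  simp only [sub_sub, add_sub_cancel]

end Lebesgue

theorem integral_le_setIntegral_of_nonpos_compl {α : Type*} [MeasurableSpace α] {μ : Measure α}
    {f : α → ℝ} {s : Set α} (hs : MeasurableSet s) (hf : Integrable f μ)
    (hcompl : ∀ x ∈ sᶜ, f x ≤ 0) : ∫ x, f x ∂μ ≤ ∫ x in s, f x ∂μ := by
  rw [← integral_add_compl hs hf]
  exact add_le_of_nonpos_right (setIntegral_nonpos hs.compl hcompl)

theorem setIntegral_Iio_nonneg_of_sign_change {α : Type*} [LinearOrder α] [TopologicalSpace α]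
    [ClosedIciTopology α] [MeasurableSpace α] [OpensMeasurableSpace α] {μ : Measure α}
    {f : α → ℝ} {u : α} (hf : Integrable f μ) (hf_integral : 0 ≤ ∫ x, f x ∂μ)
    (hlt : ∀ x < u, 0 ≤ f x) (hge : ∀ x, u ≤ x → f x ≤ 0) (y : α) :
    0 ≤ ∫ x in Set.Iio y, f x ∂μ := by
  rcases le_total y u with hyu | huy
  · exact setIntegral_nonneg measurableSet_Iio fun x hx => hlt x (hx.trans_le hyu)
  · exact hf_integral.trans <| integral_le_setIntegral_of_nonpos_compl measurableSet_Iio hf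
      fun x hx => hge x (huy.trans (not_lt.mp hx))

theorem bgk_defect_measure_nonneg_general {F : ℝ → ℝ} {u : ℝ}
    (hF_le : ∀ ξ < u, F ξ ≤ 1) (hF_nonneg : ∀ ξ, u ≤ ξ → 0 ≤ F ξ)
    (hint : Integrable (fun ξ => F ξ - (Set.Iio (0 : ℝ)).indicator (fun _ => (1 : ℝ)) ξ))
    (hu : u = ∫ ξ : ℝ, (F ξ - (Set.Iio (0 : ℝ)).indicator (fun _ => (1 : ℝ)) ξ)) :
    (∫ ζ : ℝ, ((Set.Iio u).indicator (fun _ => (1 : ℝ)) ζ - F ζ)) = 0 ∧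
    ∀ ξ : ℝ, 0 ≤ ∫ ζ in Set.Iio ξ, ((Set.Iio u).indicator (fun _ => (1 : ℝ)) ζ - F ζ) := by
  have integral_eq_zero : ∫ ζ, ((Set.Iio u).indicator (fun _ => (1 : ℝ)) ζ - F ζ) = 0 := by
    rw [integral_indicator_Iio_sub hint, ← hu, smul_eq_mul, mul_one, sub_zero, sub_self]
  refine ⟨integral_eq_zero, setIntegral_Iio_nonneg_of_sign_change (u := u)
    (integrable_indicator_Iio_sub hint u) integral_eq_zero.ge (fun ζ hζ => ?_) (fun ζ hζ => ?_)⟩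
  · rw [Set.indicator_of_mem (Set.mem_Iio.mpr hζ)]
    exact sub_nonneg.mpr (hF_le ζ hζ)
  · rw [Set.indicator_of_notMem (Set.notMem_Iio.mpr hζ), zero_sub]
    exact neg_nonpos.mpr (hF_nonneg ζ hζ)

/-- Nonnegativity of the BGK defect measure: if `F : ℝ → [0,1]` is measurable with
`ξ ↦ F(ξ) - 1_{0>ξ}` integrable, `u = ∫ (F - 1_{0>·})` is the local density and
`m(ξ) = ∫_{-∞}^ξ (1_{u>ζ} - F(ζ)) dζ`, then `∫_ℝ (1_{u>ζ} - F(ζ)) dζ = 0` and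
`m(ξ) ≥ 0` for every `ξ`. -/
theorem bgk_defect_measure_nonneg (F : ℝ → ℝ) (hFmeas : Measurable F)
    (hF0 : ∀ ξ, 0 ≤ F ξ) (hF1 : ∀ ξ, F ξ ≤ 1)
    (hint : Integrable (fun ξ => F ξ - (Set.Iio (0 : ℝ)).indicator (fun _ => (1 : ℝ)) ξ))
    (u : ℝ) (hu : u = ∫ ξ : ℝ, (F ξ - (Set.Iio (0 : ℝ)).indicator (fun _ => (1 : ℝ)) ξ)) :
    (∫ ζ : ℝ, ((Set.Iio u).indicator (fun _ => (1 : ℝ)) ζ - F ζ)) = 0 ∧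
    ∀ ξ : ℝ, 0 ≤ ∫ ζ in Set.Iio ξ, ((Set.Iio u).indicator (fun _ => (1 : ℝ)) ζ - F ζ) :=
  bgk_defect_measure_nonneg_general (fun ξ _ => hF1 ξ) (fun ξ _ => hF0 ξ) hint hu
end

section
/- (Sign preservation along characteristics.) Let N ∈ ℕ and let v : ℝ^N × ℝ → ℝ^N × ℝ be globally Lipschitz continuous, and assume that the last (scalar) component of v(x, 0) equals 0 for every x ∈ ℝ^N. Let s ≤ T and let φ : ℝ → ℝ^N × ℝ satisfy φ'(t) = v(φ(t)) for all t ∈ [s, T] (derivative in the sense of HasDerivAt). If the last component of φ(s) is nonnegative, then the last component of φ(t) is nonnegative for every t ∈ [s, T]. -/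
open Set

/-! The vector field is Lipschitz on compact sets and does not point downwards on the hyperplane
`ξ = 0`, so along a trajectory the last component `ξ` satisfies `ξ' ≥ -K * |ξ|`. Where `ξ < 0` this
reads `ξ' ≥ K * ξ`, and hence `ξ` cannot cross from above any of the curves
`t ↦ -δ * exp ((K + 1) * (t - t₀))`, `δ > 0`, which decrease strictly faster than this bound
allows. Evaluating at `t₀` and letting `δ` tend to `0` gives `ξ t₀ ≥ 0`. -/

theorem nonneg_of_mul_self_le_deriv_right {f f' : ℝ → ℝ} {K a b : ℝ}
    (hf : ContinuousOn f (Icc a b))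
    (hf' : ∀ t ∈ Ico a b, HasDerivWithinAt f (f' t) (Ici t) t) (ha : 0 ≤ f a)
    (bound : ∀ t ∈ Ico a b, f t < 0 → K * f t ≤ f' t) :
    ∀ t ∈ Icc a b, 0 ≤ f t := by
  intro t₀ ht₀
  refine le_of_forall_pos_le_add fun δ hδ => ?_
  let barrier : ℝ → ℝ := fun t => -δ * Real.exp ((K + 1) * (t - t₀))
  have barrier_neg (t : ℝ) : barrier t < 0 :=
    mul_neg_of_neg_of_pos (neg_lt_zero.mpr hδ) (Real.exp_pos _)
  have barrier_deriv (t : ℝ) : HasDerivAt barrier ((K + 1) * barrier t) t := by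
    convert! ((((hasDerivAt_id t).sub_const t₀).const_mul (K + 1)).exp).const_mul (-δ) using 1
    simp only [barrier, id]
    ring
  have deriv_lt_of_eq (t : ℝ) (ht : t ∈ Ico a b) (heq : barrier t = f t) :
      (K + 1) * barrier t < f' t := by
    calc (K + 1) * barrier t < K * barrier t := by linarith [barrier_neg t]
      _ = K * f t := by rw [heq]
      _ ≤ f' t := bound t ht (heq ▸ barrier_neg t)
  have barrier_le : barrier t₀ ≤ f t₀ :=
    image_le_of_deriv_right_lt_deriv_boundary'
      (fun t _ => (barrier_deriv t).continuousAt.continuousWithinAt)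
      (fun t _ => (barrier_deriv t).hasDerivWithinAt) ((barrier_neg a).le.trans ha) hf hf'
      deriv_lt_of_eq ht₀
  have barrier_self : barrier t₀ = -δ := by simp [barrier]
  linarith

theorem neg_mul_abs_snd_le_of_lipschitzOnWith {X : Type*} [PseudoMetricSpace X]
    {w : X × ℝ → ℝ} {K : NNReal} {S : Set (X × ℝ)} (hw : LipschitzOnWith K w S)
    {p : X × ℝ} (hp : p ∈ S) (hp0 : (p.1, 0) ∈ S) (hw0 : 0 ≤ w (p.1, 0)) : -(K * |p.2|) ≤ w p := by
  have hdist : dist p (p.1, 0) = |p.2| := by simp [Prod.dist_eq]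
  have hle : |w p - w (p.1, 0)| ≤ K * |p.2| := by
    simpa only [hdist, Real.dist_eq] using hw.dist_le_mul p hp (p.1, 0) hp0
  linarith [neg_le_of_abs_le hle]

theorem exists_neg_mul_abs_snd_le_of_locallyLipschitz {X : Type*} [PseudoMetricSpace X]
    {w : X × ℝ → ℝ} (hw : LocallyLipschitz w) (hw0 : ∀ x, 0 ≤ w (x, 0))
    {S : Set (X × ℝ)} (hS : IsCompact S) : ∃ K : NNReal, ∀ p ∈ S, -(K * |p.2|) ≤ w p := by
  let proj : X × ℝ → X × ℝ := fun p => (p.1, 0)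
  have hcompact : IsCompact (S ∪ proj '' S) := hS.union (hS.image (by fun_prop))
  obtain ⟨K, hK⟩ := hw.locallyLipschitzOn.exists_lipschitzOnWith_of_compact hcompact
  exact ⟨K, fun p hp =>
    neg_mul_abs_snd_le_of_lipschitzOnWith hK (.inl hp) (.inr (mem_image_of_mem proj hp)) (hw0 p.1)⟩

theorem sign_preserved_along_characteristics_general {E : Type*} [NormedAddCommGroup E]
    [NormedSpace ℝ E] {v : E × ℝ → E × ℝ} (hv : LocallyLipschitz fun p => (v p).2)
    (hv0 : ∀ x, 0 ≤ (v (x, 0)).2) {s T : ℝ} {φ : ℝ → E × ℝ} (hφ : ContinuousOn φ (Icc s T))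
    (hφ' : ∀ t ∈ Ico s T, HasDerivWithinAt φ (v (φ t)) (Ici t) t) (hinit : 0 ≤ (φ s).2) :
    ∀ t ∈ Icc s T, 0 ≤ (φ t).2 := by
  obtain ⟨K, hK⟩ :=
    exists_neg_mul_abs_snd_le_of_locallyLipschitz hv hv0 (isCompact_Icc.image_of_continuousOn hφ)
  have hderiv : ∀ t ∈ Ico s T, HasDerivWithinAt (fun r => (φ r).2) (v (φ t)).2 (Ici t) t :=
    fun t ht => (hasFDerivAt_snd (𝕜 := ℝ) (p := φ t)).comp_hasDerivWithinAt t (hφ' t ht)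
  refine nonneg_of_mul_self_le_deriv_right (K := K) hφ.snd hderiv hinit fun t ht hneg => ?_
  simpa only [abs_of_neg hneg, mul_neg, neg_neg] using
    hK (φ t) (mem_image_of_mem φ (Ico_subset_Icc_self ht))

/-- Sign preservation along characteristics: if the globally Lipschitz vector field `v` on
`ℝ^N × ℝ` has vanishing last component on the hyperplane `ξ = 0`, then a solution `φ` of
`φ' = v(φ)` on `[s, T]` whose last component is nonnegative at time `s` keeps a
nonnegative last component throughout `[s, T]`. -/
theorem sign_preserved_along_characteristics (N : ℕ)
    (v : (Fin N → ℝ) × ℝ → (Fin N → ℝ) × ℝ) (K : NNReal) (hv : LipschitzWith K v)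
    (hv0 : ∀ x : Fin N → ℝ, (v (x, 0)).2 = 0)
    (s T : ℝ) (hsT : s ≤ T)
    (φ : ℝ → (Fin N → ℝ) × ℝ)
    (hφ : ∀ t ∈ Icc s T, HasDerivAt φ (v (φ t)) t)
    (hinit : 0 ≤ (φ s).2) :
    ∀ t ∈ Icc s T, 0 ≤ (φ t).2 :=
  sign_preserved_along_characteristics_general
    (LipschitzWith.prod_snd.comp hv).locallyLipschitz (fun x => (hv0 x).ge)
    (fun t ht => (hφ t ht).continuousAt.continuousWithinAt)
    (fun t ht => (hφ t (Ico_subset_Icc_self ht)).hasDerivWithinAt) hinit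
end

section
/- (Liouville: divergence-free vector fields generate volume-preserving flows.) Let d ∈ ℕ, let v : ℝ^d → ℝ^d be of class C¹ with vanishing divergence, i.e., trace(Dv(x)) = 0 for all x ∈ ℝ^d, where Dv(x) is the Fréchet derivative of v at x. Let φ : ℝ × ℝ^d → ℝ^d be such that (t, x) ↦ φ(t, x) is of class C¹, φ(0, x) = x for all x, and ∂_t φ(t, x) = v(φ(t, x)) for all (t, x). Then the Jacobian determinant satisfies det(D_x φ(t, x)) = 1 for all t ∈ ℝ and x ∈ ℝ^d. -/
/-!
Differentiating `∂ₜ φ = v(t, φ)` in space shows that `A(t) = D_x φ(t, x)` solves the linear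
variational equation `A' = D v(t, φ(t, x)) ∘ A`. By Jacobi's formula `J = det A` then solves the
scalar equation `J' = (div v)(t, φ(t, x)) J` with `J(0) = 1`, so `J` is the exponential of the
divergence integrated along the trajectory.

Although `φ` is only `C¹`, the derivatives `∂ₜ` and `D_x` may be exchanged because `D_x ∂ₜ φ`
exists and is continuous: the mean value inequality, first in space and then in time, bounds the
error of the linear approximation of `A`.
-/

open scoped Topology

section MixedPartials

variable {E F : Type*} [NormedAddCommGroup E] [NormedSpace ℝ E]
  [NormedAddCommGroup F] [NormedSpace ℝ F]

theorem norm_mixed_difference_le {φ f : ℝ → E → F} {f' : ℝ × E → E →L[ℝ] F}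
    {L : E →L[ℝ] F} {C : ℝ} {S : Set ℝ} {U : Set E} (hS : Convex ℝ S) (hU : Convex ℝ U)
    (hφ : ∀ s ∈ S, ∀ y ∈ U, HasDerivAt (φ · y) (f s y) s)
    (hf : ∀ s ∈ S, ∀ y ∈ U, HasFDerivAt (f s) (f' (s, y)) y)
    (hf' : ∀ s ∈ S, ∀ y ∈ U, ‖f' (s, y) - L‖ ≤ C)
    {s t : ℝ} {x y : E} (hs : s ∈ S) (ht : t ∈ S) (hx : x ∈ U) (hy : y ∈ U) :
    ‖(φ s y - φ t y - (s - t) • L y) - (φ s x - φ t x - (s - t) • L x)‖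
      ≤ C * ‖s - t‖ * ‖y - x‖ := by
  have space_bound : ∀ r ∈ S, ‖f r y - f r x - L (y - x)‖ ≤ C * ‖y - x‖ := fun r hr =>
    hU.norm_image_sub_le_of_norm_hasFDerivWithin_le'
      (fun z hz => (hf r hr z hz).hasFDerivWithinAt) (hf' r hr) hx hy
  have time_deriv : ∀ r ∈ S, HasDerivWithinAt (fun r => φ r y - φ r x - r • L (y - x))
      (f r y - f r x - L (y - x)) S r := fun r hr => by
    have linear_deriv : HasDerivAt (fun r : ℝ => r • L (y - x)) (L (y - x)) r := by
      simpa only [id, one_smul] using (hasDerivAt_id r).smul_const (L (y - x))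
    exact (((hφ r hr y hy).fun_sub (hφ r hr x hx)).fun_sub linear_deriv).hasDerivWithinAt
  calc ‖(φ s y - φ t y - (s - t) • L y) - (φ s x - φ t x - (s - t) • L x)‖
      = ‖(φ s y - φ s x - s • L (y - x)) - (φ t y - φ t x - t • L (y - x))‖ := by
        rw [map_sub]; congr 1; module
    _ ≤ C * ‖y - x‖ * ‖s - t‖ :=
        hS.norm_image_sub_le_of_norm_hasDerivWithin_le time_deriv space_bound ht hs
    _ = C * ‖s - t‖ * ‖y - x‖ := by ring

theorem hasDerivAt_of_hasFDerivAt_of_continuousAt_mixed {φ f : ℝ → E → F}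
    {φ' : ℝ → E →L[ℝ] F} {f' : ℝ × E → E →L[ℝ] F} {t : ℝ} {x : E}
    (hφ : ∀ᶠ p in 𝓝 (t, x), HasDerivAt (φ · p.2) (f p.1 p.2) p.1)
    (hf : ∀ᶠ p in 𝓝 (t, x), HasFDerivAt (f p.1) (f' p) p.2)
    (hf' : ContinuousAt f' (t, x)) (hφ' : ∀ᶠ s in 𝓝 t, HasFDerivAt (φ s) (φ' s) x) :
    HasDerivAt φ' (f' (t, x)) t := by
  refine hasDerivAt_iff_isLittleO.2 (Asymptotics.isLittleO_iff.2 fun ε hε => ?_)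
  have close : ∀ᶠ p in 𝓝 (t, x), ‖f' p - f' (t, x)‖ ≤ ε := by
    filter_upwards [hf'.eventually (Metric.closedBall_mem_nhds _ hε)] with p hp
    rwa [← dist_eq_norm]
  obtain ⟨δ, hδ, hball⟩ := Metric.eventually_nhds_iff_ball.1 (hφ.and (hf.and close))
  have on_product : ∀ s ∈ Metric.ball t δ, ∀ y ∈ Metric.ball x δ, (s, y) ∈ Metric.ball (t, x) δ :=
    fun s hs y hy => by rw [← ball_prod_same]; exact ⟨hs, hy⟩
  filter_upwards [hφ', Metric.ball_mem_nhds t hδ] with s hs hst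
  have hdiff : HasFDerivAt (fun y => φ s y - φ t y - (s - t) • f' (t, x) y)
      (φ' s - φ' t - (s - t) • f' (t, x)) x :=
    (hs.sub hφ'.self_of_nhds).sub ((f' (t, x)).hasFDerivAt.const_smul (s - t))
  refine hdiff.le_of_lip' (by positivity) ?_
  filter_upwards [Metric.ball_mem_nhds x hδ] with y hy
  exact norm_mixed_difference_le (convex_ball t δ) (convex_ball x δ)
    (fun r hr z hz => (hball _ (on_product r hr z hz)).1)
    (fun r hr z hz => (hball _ (on_product r hr z hz)).2.1)
    (fun r hr z hz => (hball _ (on_product r hr z hz)).2.2)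
    hst (Metric.mem_ball_self hδ) (Metric.mem_ball_self hδ) hy

end MixedPartials

section Jacobi

variable {𝕜 : Type*} [NontriviallyNormedField 𝕜]

theorem sum_det_updateRow {n R : Type*} [Fintype n] [DecidableEq n] [CommRing R]
    (M N : Matrix n n R) :
    ∑ i, (M.updateRow i (N i)).det = (N * M.adjugate).trace := by
  refine Finset.sum_congr rfl fun i _ => ?_
  rw [← Matrix.cramer_transpose_apply, Matrix.cramer_eq_adjugate_mulVec,
    ← Matrix.adjugate_transpose]
  exact dotProduct_comm _ _

theorem hasDerivAt_matrix_det {n : Type*} [Fintype n] [DecidableEq n]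
    {M : 𝕜 → Matrix n n 𝕜} {M' : Matrix n n 𝕜} {t : 𝕜}
    (hM : ∀ i j, HasDerivAt (fun s => M s i j) (M' i j) t) :
    HasDerivAt (fun s => (M s).det) (M' * (M t).adjugate).trace t := by
  let det : (n → 𝕜) [⋀^n]→L[𝕜] 𝕜 :=
    { Matrix.detRowAlternating with cont := Continuous.matrix_det continuous_id }
  have hrows : HasDerivAt (fun s i => M s i) (fun i => M' i) t :=
    hasDerivAt_pi.2 fun i => hasDerivAt_pi.2 (hM i)
  have h := (det.hasFDerivAt (M t)).comp_hasDerivAt t hrows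
  have hrow_sum : det.linearDeriv (M t) (fun i => M' i) = ∑ i, ((M t).updateRow i (M' i)).det :=
    ContinuousMultilinearMap.linearDeriv_apply _ _ _
  rwa [hrow_sum, sum_det_updateRow] at h

theorem hasDerivAt_det_of_hasDerivAt_comp [CompleteSpace 𝕜] {E : Type*} [NormedAddCommGroup E]
    [NormedSpace 𝕜 E] [FiniteDimensional 𝕜 E] {A : 𝕜 → E →L[𝕜] E} {B : E →L[𝕜] E} {t : 𝕜}
    (hA : HasDerivAt A (B ∘L A t) t) :
    HasDerivAt (fun s => (A s).det) (LinearMap.trace 𝕜 E B * (A t).det) t := by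
  let b := Module.finBasis 𝕜 E
  let matrix (T : E →L[𝕜] E) := LinearMap.toMatrix b b T
  have hentry : ∀ i j, HasDerivAt (fun s => matrix (A s) i j) (matrix (B ∘L A t) i j) t := by
    intro i j
    have hcolumn := hA.clm_apply (hasDerivAt_const t (b j))
    have hcoord :=
      (b.coord i).toContinuousLinearMap.hasFDerivAt.comp_hasDerivAt t hcolumn
    simpa [matrix, LinearMap.toMatrix_apply, Function.comp_def] using hcoord
  have htrace : (matrix (B ∘L A t) * (matrix (A t)).adjugate).trace
      = LinearMap.trace 𝕜 E B * (A t).det := by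
    calc _ = (matrix B * (matrix (A t) * (matrix (A t)).adjugate)).trace := by
          simp only [matrix, ContinuousLinearMap.toLinearMap_comp, LinearMap.toMatrix_comp b b b,
            Matrix.mul_assoc]
      _ = (matrix (A t)).det * (matrix B).trace := by
          rw [Matrix.mul_adjugate, Matrix.mul_smul, Matrix.mul_one, Matrix.trace_smul, smul_eq_mul]
      _ = LinearMap.trace 𝕜 E B * (A t).det := by
          rw [LinearMap.det_toMatrix, LinearMap.trace_eq_matrix_trace 𝕜 b, mul_comm]
  simpa only [htrace, matrix, LinearMap.det_toMatrix] using hasDerivAt_matrix_det hentry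

end Jacobi

theorem eq_exp_integral_smul_of_hasDerivAt {F : Type*} [NormedAddCommGroup F] [NormedSpace ℝ F]
    {a : ℝ → ℝ} {u : ℝ → F} (ha : Continuous a) (hu : ∀ t, HasDerivAt u (a t • u t) t)
    (t₀ t : ℝ) : u t = Real.exp (∫ s in t₀..t, a s) • u t₀ := by
  let w (t : ℝ) : F := Real.exp (-∫ s in t₀..t, a s) • u t
  have hw (t : ℝ) : HasDerivAt w 0 t := by
    have hexp : HasDerivAt (fun t => Real.exp (-∫ s in t₀..t, a s))
        (Real.exp (-∫ s in t₀..t, a s) * -a t) t :=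
      (ha.integral_hasStrictDerivAt t₀ t).hasDerivAt.neg.exp
    have hproduct := hexp.fun_smul (hu t)
    rwa [smul_smul, mul_neg, neg_smul, add_neg_cancel] at hproduct
  have hconst : w t = w t₀ := is_const_of_deriv_eq_zero
    (fun s => (hw s).differentiableAt) (fun s => (hw s).deriv) t t₀
  have hw₀ : w t₀ = u t₀ := by simp [w]
  rw [← hw₀, ← hconst, smul_smul, ← Real.exp_add, add_neg_cancel, Real.exp_zero, one_smul]

theorem hasDerivAt_fderiv_flow {E : Type*} [NormedAddCommGroup E] [NormedSpace ℝ E]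
    {v φ : ℝ → E → E} (hv : ∀ t, Differentiable ℝ (v t))
    (hv' : Continuous fun p : ℝ × E => fderiv ℝ (v p.1) p.2) (hφ : ContDiff ℝ 1 ↿φ)
    (hode : ∀ t x, HasDerivAt (φ · x) (v t (φ t x)) t) (t : ℝ) (x : E) :
    HasDerivAt (fun s => fderiv ℝ (φ s) x)
      (fderiv ℝ (v t) (φ t x) ∘L fderiv ℝ (φ t) x) t := by
  have hφ_space (s : ℝ) : Differentiable ℝ (φ s) :=
    (hφ.comp (contDiff_prodMk_right s)).differentiable one_ne_zero
  have hφ_fderiv : Continuous fun p : ℝ × E => fderiv ℝ (φ p.1) p.2 :=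
    Continuous.fderiv_one (f := fun p : ℝ × E => φ p.1)
      (hφ.comp ((contDiff_fst.comp contDiff_fst).prodMk contDiff_snd)) continuous_snd
  have hmixed : Continuous fun p : ℝ × E =>
      fderiv ℝ (v p.1) (φ p.1 p.2) ∘L fderiv ℝ (φ p.1) p.2 :=
    (hv'.comp (continuous_fst.prodMk hφ.continuous)).clm_comp hφ_fderiv
  exact hasDerivAt_of_hasFDerivAt_of_continuousAt_mixed (f := fun s y => v s (φ s y))
    (.of_forall fun p => hode p.1 p.2)
    (.of_forall fun p => (hv p.1 _).hasFDerivAt.comp p.2 (hφ_space p.1 p.2).hasFDerivAt)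
    hmixed.continuousAt (.of_forall fun s => (hφ_space s x).hasFDerivAt)

/-- The divergence of a vector field at a point, encoded without coordinates as the trace of its
Fréchet derivative; this gives the junk value `0` where the field is not differentiable. -/
noncomputable def divergence {E : Type*} [NormedAddCommGroup E] [NormedSpace ℝ E]
    (v : E → E) (x : E) : ℝ :=
  LinearMap.trace ℝ E (fderiv ℝ v x)

theorem liouville_divergence_free_flow_volume_preserving_general {E : Type*}
    [NormedAddCommGroup E] [NormedSpace ℝ E] [FiniteDimensional ℝ E] {v φ : ℝ → E → E}
    (hv : ∀ t, Differentiable ℝ (v t))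
    (hv' : Continuous fun p : ℝ × E => fderiv ℝ (v p.1) p.2)
    (hφ : ContDiff ℝ 1 ↿φ) (hφ0 : ∀ x, φ 0 x = x)
    (hode : ∀ t x, HasDerivAt (φ · x) (v t (φ t x)) t) (t : ℝ) (x : E) :
    (fderiv ℝ (φ t) x).det = Real.exp (∫ s in (0 : ℝ)..t, divergence (v s) (φ s x)) := by
  have hdet (s : ℝ) : HasDerivAt (fun s => (fderiv ℝ (φ s) x).det)
      (divergence (v s) (φ s x) * (fderiv ℝ (φ s) x).det) s :=
    hasDerivAt_det_of_hasDerivAt_comp (hasDerivAt_fderiv_flow hv hv' hφ hode s x)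
  have hdiv : Continuous fun s => divergence (v s) (φ s x) := by
    have htrace : Continuous fun T : E →L[ℝ] E => LinearMap.trace ℝ E T :=
      (LinearMap.trace ℝ E ∘ₗ ContinuousLinearMap.coeLM ℝ).continuous_of_finiteDimensional
    exact htrace.comp (hv'.comp (continuous_id.prodMk
      (hφ.continuous.comp (continuous_id.prodMk continuous_const))))
  have hdet₀ : (fderiv ℝ (φ 0) x).det = 1 := by
    rw [show φ 0 = id from funext hφ0, fderiv_id]
    exact LinearMap.det_id
  simpa [hdet₀] using eq_exp_integral_smul_of_hasDerivAt hdiv hdet 0 t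

/-- Liouville's theorem: the flow of a `C¹` divergence-free vector field on `ℝ^d` is
volume preserving, i.e. the Jacobian determinant of the flow map equals `1`. -/
theorem liouville_divergence_free_flow_volume_preserving (d : ℕ)
    (v : (Fin d → ℝ) → (Fin d → ℝ)) (hv : ContDiff ℝ 1 v)
    (hdiv : ∀ x, LinearMap.trace ℝ (Fin d → ℝ)
      ((fderiv ℝ v x : (Fin d → ℝ) →L[ℝ] (Fin d → ℝ)) :
        (Fin d → ℝ) →ₗ[ℝ] (Fin d → ℝ)) = 0)
    (φ : ℝ → (Fin d → ℝ) → (Fin d → ℝ))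
    (hφreg : ContDiff ℝ 1 (fun p : ℝ × (Fin d → ℝ) => φ p.1 p.2))
    (hφ0 : ∀ x, φ 0 x = x)
    (hφode : ∀ t x, HasDerivAt (fun τ => φ τ x) (v (φ t x)) t) :
    ∀ (t : ℝ) (x : Fin d → ℝ),
      LinearMap.det
        ((fderiv ℝ (fun y => φ t y) x : (Fin d → ℝ) →L[ℝ] (Fin d → ℝ)) :
          (Fin d → ℝ) →ₗ[ℝ] (Fin d → ℝ)) = 1 := by
  intro t x
  have liouville := liouville_divergence_free_flow_volume_preserving_general
    (v := fun _ => v) (fun _ => hv.differentiable one_ne_zero)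
    ((hv.continuous_fderiv one_ne_zero).comp continuous_snd) hφreg hφ0 hφode t x
  simpa [divergence, hdiv] using liouville
end

section
/- Let ε > 0, T ≥ 0, and let H : ℝ → ℝ be continuous on [0, T]. Assume that for every t ∈ [0, T], H(t) ≤ e^{−t/ε} H(0) + (1 − e^{−t/ε}) · sup_{0 ≤ s ≤ t} H(s). Then H(t) ≤ H(0) for every t ∈ [0, T]. -/
open Set

/-!
Let `M` be the supremum of `H` over the whole interval. The running suprema lie between `H a` and
`M`, so enlarging them to `M` and shrinking the weights of `H a` to a common lower bound
`c ∈ (0, 1]` only increases the right-hand sides. Thus every value of `H` is at most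
`c * H a + (1 - c) * M`; hence so is `M`, that is, `c * M ≤ c * H a`.
-/

theorem mul_add_one_sub_mul_le {c w x y z : ℝ} (hc : c ≤ 1) (hcw : c ≤ w) (hxy : x ≤ y)
    (hyz : y ≤ z) : w * x + (1 - w) * y ≤ c * x + (1 - c) * z :=
  calc
    w * x + (1 - w) * y = x + (1 - w) * (y - x) := by ring
    _ ≤ x + (1 - c) * (y - x) := by
      have : 0 ≤ y - x := sub_nonneg.2 hxy
      gcongr
    _ ≤ x + (1 - c) * (z - x) := by
      have : 0 ≤ 1 - c := sub_nonneg.2 hc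
      gcongr
    _ = c * x + (1 - c) * z := by ring

theorem sSup_le_of_forall_le_mul_add {s : Set ℝ} {c x : ℝ} (hs : s.Nonempty) (hc : 0 < c)
    (h : ∀ y ∈ s, y ≤ c * x + (1 - c) * sSup s) : sSup s ≤ x := by
  have hsup : sSup s ≤ c * x + (1 - c) * sSup s := csSup_le hs h
  refine le_of_mul_le_mul_left ?_ hc
  linarith

theorem sup_exp_gronwall_general {α : Type*} [Preorder α] {a b : α} {H w : α → ℝ} {c : ℝ}
    (hc : 0 < c) (hw : ∀ t ∈ Icc a b, c ≤ w t) (hbdd : BddAbove (H '' Icc a b))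
    (hineq : ∀ t ∈ Icc a b, H t ≤ w t * H a + (1 - w t) * sSup (H '' Icc a t)) :
    ∀ t ∈ Icc a b, H t ≤ H a := by
  intro t ht
  have hsup : sSup (H '' Icc a b) ≤ H a := by
    refine sSup_le_of_forall_le_mul_add ⟨H t, mem_image_of_mem H ht⟩
      (lt_min hc one_pos) ?_
    rintro _ ⟨s, hs, rfl⟩
    have hsub : H '' Icc a s ⊆ H '' Icc a b := image_mono (Icc_subset_Icc_right hs.2)
    have hmem : H a ∈ H '' Icc a s := mem_image_of_mem H (left_mem_Icc.2 hs.1)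
    exact (hineq s hs).trans <| mul_add_one_sub_mul_le (min_le_right c 1)
      ((min_le_left c 1).trans (hw s hs)) (le_csSup (hbdd.mono hsub) hmem)
      (csSup_le_csSup hbdd ⟨H a, hmem⟩ hsub)
  exact (le_csSup hbdd (mem_image_of_mem H ht)).trans hsup

/-- If a continuous function `H` on `[0, T]` satisfies
`H(t) ≤ e^{-t/ε} H(0) + (1 - e^{-t/ε}) sup_{0 ≤ s ≤ t} H(s)` for every `t ∈ [0, T]`,
then `H(t) ≤ H(0)` on `[0, T]`. -/
theorem sup_exp_gronwall (ε T : ℝ) (hε : 0 < ε) (hT : 0 ≤ T)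
    (H : ℝ → ℝ) (hcont : ContinuousOn H (Icc 0 T))
    (hineq : ∀ t ∈ Icc 0 T,
      H t ≤ Real.exp (-t / ε) * H 0 + (1 - Real.exp (-t / ε)) * sSup (H '' Icc 0 t)) :
    ∀ t ∈ Icc 0 T, H t ≤ H 0 :=
  sup_exp_gronwall_general (Real.exp_pos (-T / ε)) (fun t ht ↦ by gcongr; exact ht.2)
    (isCompact_Icc.bddAbove_image hcont) hineq
end
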